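/- Let λ < 0 and n ≥ 2 be an integer. There exists R₀ > 0 such that for every R ≥ R₀ the following holds: if (r, s, φ) is a solution of the transformed system on a right-maximal interval [0, T) (0 < T ≤ ∞, i.e. the solution cannot be extended as a solution of the transformed system, with r² > s², to any strictly larger interval [0, T')) with initial conditions r(0) = R, s(0) = 0, φ(0) = 0, then there exists t ∈ (0, T) with φ(t) = −π/2 and φ(τ) ∈ (−π/2, 0] for all τ ∈ [0, t). -/

import Mathlib

open Real

/-- `TransSol lam n r s φ J` says that `(r, s, φ)` solves the transformed system of ODEs
on the set `J`, staying in the region `r² > s²`. -/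
def TransSol (lam : ℝ) (n : ℕ) (r s φ : ℝ → ℝ) (J : Set ℝ) : Prop :=
  ∀ t ∈ J, (s t) ^ 2 < (r t) ^ 2 ∧
    HasDerivAt r (Real.sin (φ t)) t ∧
    HasDerivAt s (Real.cos (φ t)) t ∧
    HasDerivAt φ
      ((-(r t) / 2 + 2 * ((n : ℝ) - 1) * r t / ((r t) ^ 2 - (s t) ^ 2)) * Real.cos (φ t) +
        (s t / 2 + 2 * ((n : ℝ) - 1) * s t / ((r t) ^ 2 - (s t) ^ 2)) * Real.sin (φ t) +
        lam) t

/-!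
Let `L = π / (2|λ|)`. As `r` and `s` are `1`-Lipschitz, up to time `L` a launch from large `R` keeps
`|s| ≤ L` and `r² - s²` large, so that `φ' = -r A cos φ + s B sin φ + λ` with `A, B ≥ 0`. Hence `φ`
never becomes positive, and while `φ ≥ -π/2` we have `s ≥ 0` and `φ' ≤ λ`: the angle falls to `-π/2`
by time `L`, provided that the solution lives that long. If it did not reach `-π/2`, then `r`, `s`
and `φ` would be monotone and bounded, hence converge at the end of the interval to a point with
`s² < r²`, and Picard–Lindelöf would continue the solution, against maximality.
-/

open Filter Set Topology

theorem hasDerivAt_ite_lt_of_tendsto {E : Type*} [NormedAddCommGroup E] [NormedSpace ℝ E]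
    {f α : ℝ → E} {e : E} {S : Set ℝ} {T : ℝ} (hS : S ∈ 𝓝[<] T)
    (hf : ∀ t ∈ S, DifferentiableAt ℝ f t) (hlim : Tendsto f (𝓝[<] T) (𝓝 (α T)))
    (hderiv : Tendsto (deriv f) (𝓝[<] T) (𝓝 e)) (hα : HasDerivWithinAt α e (Ici T) T) :
    HasDerivAt (fun t => if t < T then f t else α t) e T := by
  set g : ℝ → E := fun t => if t < T then f t else α t
  have hgα : EqOn g α (Ici T) := fun t ht => if_neg (not_lt.2 ht)
  have hgf : ∀ t < T, g =ᶠ[𝓝 t] f := fun t ht => by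
    filter_upwards [Iio_mem_nhds ht] with u hu using if_pos hu
  have hgf_left : g =ᶠ[𝓝[<] T] f := by
    filter_upwards [self_mem_nhdsWithin] with u hu using if_pos hu
  have hleft : HasDerivWithinAt g e (Iic T) T := by
    refine hasDerivWithinAt_Iic_of_tendsto_deriv (s := S ∩ Iio T) (fun t ht => ?_) ?_
      (inter_mem hS self_mem_nhdsWithin) (hderiv.congr' ?_)
    · exact ((hgf t ht.2).differentiableAt_iff.2 (hf t ht.1)).differentiableWithinAt
    · rw [ContinuousWithinAt, hgα self_mem_Ici]
      exact (hlim.congr' hgf_left.symm).mono_left (nhdsWithin_mono _ inter_subset_right)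
    · filter_upwards [self_mem_nhdsWithin] with t ht using (hgf t ht).deriv_eq.symm
  have hright : HasDerivWithinAt g e (Ici T) T := hα.congr hgα (hgα self_mem_Ici)
  simpa only [Iic_union_Ici, hasDerivWithinAt_univ] using hleft.union hright

theorem exists_hasDerivAt_extension_of_tendsto {E : Type*} [NormedAddCommGroup E]
    [NormedSpace ℝ E] [CompleteSpace E] {F : E → E} {U : Set E} {f : ℝ → E} {a T : ℝ} {p : E}
    (haT : a < T) (hf : ∀ t ∈ Ico a T, f t ∈ U ∧ HasDerivAt f (F (f t)) t)
    (hlim : Tendsto f (𝓝[<] T) (𝓝 p)) (hF : ContDiffAt ℝ 1 F p) (hU : U ∈ 𝓝 p) :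
    ∃ T' > T, ∃ g : ℝ → E, EqOn g f (Iio T) ∧
      ∀ t ∈ Ico a T', g t ∈ U ∧ HasDerivAt g (F (g t)) t := by
  obtain ⟨α, rfl, ε, hε, hα⟩ :=
    hF.exists_forall_mem_closedBall_exists_eq_forall_mem_Ioo_hasDerivAt₀ T
  have hαT : HasDerivAt α (F (α T)) T := hα T ⟨by linarith, by linarith⟩
  have hα_near : ∀ᶠ t in 𝓝[≥] T, α t ∈ U ∧ HasDerivAt α (F (α t)) t :=
    nhdsWithin_le_nhds <| (hαT.continuousAt.eventually_mem hU).and <|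
      mem_of_superset (Ioo_mem_nhds (by linarith) (by linarith)) hα
  obtain ⟨T', hTT', hα_mem⟩ := mem_nhdsGE_iff_exists_Ico_subset.1 hα_near
  have hnear : Ico a T ∈ 𝓝[<] T := Ico_mem_nhdsLT haT
  have hderiv : Tendsto (deriv f) (𝓝[<] T) (𝓝 (F (α T))) := by
    refine (hF.continuousAt.tendsto.comp hlim).congr' ?_
    filter_upwards [hnear] with t ht using (hf t ht).2.deriv.symm
  have hglue := hasDerivAt_ite_lt_of_tendsto hnear (fun t ht => (hf t ht).2.differentiableAt)
    hlim hderiv hαT.hasDerivWithinAt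
  refine ⟨T', hTT', fun t => if t < T then f t else α t, fun t ht => if_pos ht, fun t ht => ?_⟩
  rcases lt_trichotomy t T with htT | rfl | hTt
  · simp only [if_pos htT]
    refine ⟨(hf t ⟨ht.1, htT⟩).1, (hf t ⟨ht.1, htT⟩).2.congr_of_eventuallyEq ?_⟩
    filter_upwards [Iio_mem_nhds htT] with u hu using if_pos hu
  · simpa only [lt_self_iff_false, if_false] using ⟨(hα_mem ⟨le_rfl, ht.2⟩).1, hglue⟩
  · simp only [if_neg hTt.not_gt]
    refine ⟨(hα_mem ⟨hTt.le, ht.2⟩).1, (hα_mem ⟨hTt.le, ht.2⟩).2.congr_of_eventuallyEq ?_⟩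
    filter_upwards [Ioi_mem_nhds hTt] with u hu using if_neg (not_lt.2 (le_of_lt hu))

theorem monotoneOn_of_forall_hasDerivAt_nonneg {D : Set ℝ} (hD : Convex ℝ D) {f f' : ℝ → ℝ}
    (hf : ∀ t ∈ D, HasDerivAt f (f' t) t) (hf' : ∀ t ∈ D, 0 ≤ f' t) : MonotoneOn f D :=
  monotoneOn_of_hasDerivWithinAt_nonneg hD (HasDerivAt.continuousOn hf)
    (fun t ht => (hf t (interior_subset ht)).hasDerivWithinAt)
    (fun t ht => hf' t (interior_subset ht))

theorem antitoneOn_of_forall_hasDerivAt_nonpos {D : Set ℝ} (hD : Convex ℝ D) {f f' : ℝ → ℝ}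
    (hf : ∀ t ∈ D, HasDerivAt f (f' t) t) (hf' : ∀ t ∈ D, f' t ≤ 0) : AntitoneOn f D :=
  antitoneOn_of_hasDerivWithinAt_nonpos hD (HasDerivAt.continuousOn hf)
    (fun t ht => (hf t (interior_subset ht)).hasDerivWithinAt)
    (fun t ht => hf' t (interior_subset ht))

section OrderTopology

variable {α β : Type*} [TopologicalSpace α] [TopologicalSpace β]

section Limits

variable [LinearOrder α] [OrderTopology α] [DenselyOrdered α] [ConditionallyCompleteLinearOrder β]
  [OrderTopology β] {f : α → β} {a T : α} {c d : β}

theorem exists_tendsto_nhdsLT_of_monotoneOn (haT : a < T) (hf : MonotoneOn f (Ico a T))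
    (hmaps : MapsTo f (Ico a T) (Icc c d)) : ∃ l ∈ Icc c d, Tendsto f (𝓝[<] T) (𝓝 l) := by
  have hlim := (hf.mono Ioo_subset_Ico_self).tendsto_nhdsWithin_Ioo_left (nonempty_Ioo.2 haT)
    ⟨d, forall_mem_image.2 fun t ht => (hmaps (Ioo_subset_Ico_self ht)).2⟩
  have : (𝓝[<] T).NeBot := nhdsLT_neBot_of_exists_lt ⟨a, haT⟩
  exact ⟨_, isClosed_Icc.mem_of_tendsto hlim (mem_of_superset (Ico_mem_nhdsLT haT) hmaps), hlim⟩

theorem exists_tendsto_nhdsLT_of_antitoneOn (haT : a < T) (hf : AntitoneOn f (Ico a T))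
    (hmaps : MapsTo f (Ico a T) (Icc c d)) : ∃ l ∈ Icc c d, Tendsto f (𝓝[<] T) (𝓝 l) := by
  obtain ⟨l, hl, hlim⟩ := exists_tendsto_nhdsLT_of_monotoneOn (β := βᵒᵈ) haT hf.dual_right
    (c := OrderDual.toDual d) (d := OrderDual.toDual c) fun t ht => (hmaps ht).symm
  exact ⟨l, hl.symm, hlim⟩

end Limits

theorem exists_first_eq_of_continuousOn [ConditionallyCompleteLinearOrder α] [DenselyOrdered α]
    [OrderTopology α] [LinearOrder β] [OrderClosedTopology β] {f : α → β} {a b : α} {c : β}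
    (hf : ContinuousOn f (Icc a b)) (hab : a ≤ b) (hca : c < f a) (hbc : f b ≤ c) :
    ∃ t ∈ Ioc a b, f t = c ∧ ∀ u ∈ Ico a t, c < f u := by
  have hclosed : IsClosed (Icc a b ∩ f ⁻¹' Iic c) :=
    hf.preimage_isClosed_of_isClosed isClosed_Icc isClosed_Iic
  obtain ⟨t, ⟨htab, htc⟩, hmin⟩ :=
    (isCompact_Icc.of_isClosed_subset hclosed inter_subset_left).exists_isLeast
      ⟨b, right_mem_Icc.2 hab, hbc⟩
  obtain ⟨u, hu, rfl⟩ : c ∈ f '' Icc a t :=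
    intermediate_value_Icc' htab.1 (hf.mono (Icc_subset_Icc_right htab.2)) ⟨htc, hca.le⟩
  obtain rfl : u = t := hu.2.antisymm (hmin ⟨⟨hu.1, hu.2.trans htab.2⟩, le_rfl⟩)
  refine ⟨u, ⟨hu.1.lt_of_ne (by rintro rfl; exact hca.false), htab.2⟩, rfl, fun v hv => ?_⟩
  by_contra! hvc
  exact (hmin ⟨⟨hv.1, hv.2.le.trans htab.2⟩, hvc⟩).not_gt hv.2

end OrderTopology

/-- The right-hand side of the equation for `φ'` in the transformed system, with the real parameter
`m` in place of `2 * (n - 1)`. -/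
noncomputable def angularVelocity (lam m r s φ : ℝ) : ℝ :=
  (-r / 2 + m * r / (r ^ 2 - s ^ 2)) * cos φ + (s / 2 + m * s / (r ^ 2 - s ^ 2)) * sin φ + lam

/-- The vector field of the transformed system on the phase space of points `(r, s, φ)`. -/
noncomputable def phaseField (lam m : ℝ) (x : ℝ × ℝ × ℝ) : ℝ × ℝ × ℝ :=
  (sin x.2.2, cos x.2.2, angularVelocity lam m x.1 x.2.1 x.2.2)

theorem contDiffAt_phaseField {k : WithTop ℕ∞} {lam m : ℝ} {x : ℝ × ℝ × ℝ}
    (hx : x.1 ^ 2 - x.2.1 ^ 2 ≠ 0) : ContDiffAt ℝ k (phaseField lam m) x := by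
  unfold phaseField angularVelocity
  fun_prop (disch := exact hx)

section AngularVelocity

variable {lam m r s φ : ℝ}

theorem cos_coeff_nonpos (hr : 0 ≤ r) (hm : 2 * |m| ≤ r ^ 2 - s ^ 2) :
    -r / 2 + m * r / (r ^ 2 - s ^ 2) ≤ 0 := by
  have hratio : m / (r ^ 2 - s ^ 2) ≤ 1 / 2 :=
    div_le_of_le_mul₀ (by linarith [abs_nonneg m]) (by norm_num) (by linarith [le_abs_self m])
  calc -r / 2 + m * r / (r ^ 2 - s ^ 2) = r * (m / (r ^ 2 - s ^ 2) - 1 / 2) := by ring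
    _ ≤ 0 := mul_nonpos_of_nonneg_of_nonpos hr (sub_nonpos.2 hratio)

theorem sin_coeff_nonneg (hs : 0 ≤ s) (hm : 2 * |m| ≤ r ^ 2 - s ^ 2) :
    0 ≤ s / 2 + m * s / (r ^ 2 - s ^ 2) := by
  have hratio : -m / (r ^ 2 - s ^ 2) ≤ 1 / 2 :=
    div_le_of_le_mul₀ (by linarith [abs_nonneg m]) (by norm_num) (by linarith [neg_le_abs m])
  calc 0 ≤ s * (1 / 2 - -m / (r ^ 2 - s ^ 2)) := mul_nonneg hs (sub_nonneg.2 hratio)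
    _ = s / 2 + m * s / (r ^ 2 - s ^ 2) := by ring

theorem angularVelocity_zero_le (hr : 0 ≤ r) (hm : 2 * |m| ≤ r ^ 2 - s ^ 2) :
    angularVelocity lam m r s 0 ≤ lam := by
  simpa [angularVelocity] using cos_coeff_nonpos hr hm

theorem angularVelocity_le (hr : 0 ≤ r) (hs : 0 ≤ s) (hm : 2 * |m| ≤ r ^ 2 - s ^ 2)
    (hcos : 0 ≤ cos φ) (hsin : sin φ ≤ 0) : angularVelocity lam m r s φ ≤ lam := by
  have hcos_term := mul_nonpos_of_nonpos_of_nonneg (cos_coeff_nonpos hr hm) hcos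
  have hsin_term := mul_nonpos_of_nonneg_of_nonpos (sin_coeff_nonneg hs hm) hsin
  unfold angularVelocity
  linarith

end AngularVelocity

section Solutions

variable {lam L T : ℝ} {n : ℕ} {r s φ : ℝ → ℝ} {J : Set ℝ}

namespace TransSol

theorem hasDerivAt_angle (h : TransSol lam n r s φ J) :
    ∀ t ∈ J, HasDerivAt φ (angularVelocity lam (2 * (n - 1)) (r t) (s t) (φ t)) t :=
  fun t ht => (h t ht).2.2.2

theorem exists_extension {t₀ a b c : ℝ} (h : TransSol lam n r s φ (Ico t₀ T)) (ht₀ : t₀ < T)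
    (hr : Tendsto r (𝓝[<] T) (𝓝 a)) (hs : Tendsto s (𝓝[<] T) (𝓝 b))
    (hφ : Tendsto φ (𝓝[<] T) (𝓝 c)) (hab : b ^ 2 < a ^ 2) :
    ∃ T' > T, ∃ r' s' φ' : ℝ → ℝ,
      (∀ u ∈ Ico t₀ T, r' u = r u ∧ s' u = s u ∧ φ' u = φ u) ∧
        TransSol lam n r' s' φ' (Ico t₀ T') := by
  have hregion : {x : ℝ × ℝ × ℝ | x.2.1 ^ 2 < x.1 ^ 2} ∈ 𝓝 (a, b, c) :=
    (isOpen_lt (by fun_prop) (by fun_prop)).mem_nhds hab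
  obtain ⟨T', hT', g, hgf, hg⟩ := exists_hasDerivAt_extension_of_tendsto
    (F := phaseField lam (2 * (n - 1))) (f := fun t => (r t, s t, φ t)) ht₀
    (fun t ht => ⟨(h t ht).1,
      (h t ht).2.1.prodMk ((h t ht).2.2.1.prodMk (h.hasDerivAt_angle t ht))⟩)
    (hr.prodMk_nhds (hs.prodMk_nhds hφ)) (contDiffAt_phaseField (sub_pos.2 hab).ne') hregion
  refine ⟨T', hT', fun t => (g t).1, fun t => (g t).2.1, fun t => (g t).2.2, fun u hu => ?_,
    fun t ht => ?_⟩
  · simp only [hgf hu.2, and_self]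
  · obtain ⟨hmem, hderiv⟩ := hg t ht
    exact ⟨hmem, hderiv.fst, hderiv.snd.fst, hderiv.snd.snd⟩

end TransSol

/-- A solution on an interval `J` of times with `0 ∈ J ⊆ [0, L]`, launched with `s = 0` and `φ = 0`
from a radius so large that, at unit speed, `r ^ 2 - s ^ 2` stays above `4 * |n - 1|` up to time
`L`. -/
structure IsFarLaunch (lam L : ℝ) (n : ℕ) (r s φ : ℝ → ℝ) (J : Set ℝ) : Prop where
  sol : TransSol lam n r s φ J
  ordConnected : J.OrdConnected
  zero_mem : 0 ∈ J
  subset : J ⊆ Icc 0 L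
  radius_zero : 2 * L + 2 * |2 * ((n : ℝ) - 1)| + 1 ≤ r 0
  height_zero : s 0 = 0
  angle_zero : φ 0 = 0

namespace IsFarLaunch

theorem le_radius (h : IsFarLaunch lam L n r s φ J) {t : ℝ} (ht : t ∈ J) :
    L + 2 * |2 * ((n : ℝ) - 1)| + 1 ≤ r t := by
  have hlip := h.ordConnected.convex.norm_image_sub_le_of_norm_hasDerivWithin_le
    (fun u hu => (h.sol u hu).2.1.hasDerivWithinAt) (fun u _ => abs_sin_le_one _) h.zero_mem ht
  rw [norm_eq_abs, norm_eq_abs, sub_zero, abs_of_nonneg (h.subset ht).1] at hlip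
  linarith [(abs_le.1 hlip).1, (h.subset ht).2, h.radius_zero]

theorem abs_height_le (h : IsFarLaunch lam L n r s φ J) {t : ℝ} (ht : t ∈ J) : |s t| ≤ L := by
  have hlip := h.ordConnected.convex.norm_image_sub_le_of_norm_hasDerivWithin_le
    (fun u hu => (h.sol u hu).2.2.1.hasDerivWithinAt) (fun u _ => abs_cos_le_one _) h.zero_mem ht
  rw [norm_eq_abs, norm_eq_abs, h.height_zero, sub_zero, sub_zero,
    abs_of_nonneg (h.subset ht).1] at hlip
  linarith [(h.subset ht).2]

theorem radius_pos (h : IsFarLaunch lam L n r s φ J) {t : ℝ} (ht : t ∈ J) : 0 < r t := by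
  have hL := (abs_nonneg _).trans (h.abs_height_le ht)
  linarith [h.le_radius ht, abs_nonneg (2 * ((n : ℝ) - 1))]

theorem two_mul_abs_le_sq_sub_sq (h : IsFarLaunch lam L n r s φ J) {t : ℝ} (ht : t ∈ J) :
    2 * |2 * ((n : ℝ) - 1)| ≤ r t ^ 2 - s t ^ 2 := by
  have hm := abs_nonneg (2 * ((n : ℝ) - 1))
  have hL := (abs_nonneg _).trans (h.abs_height_le ht)
  have hs : s t ^ 2 ≤ L ^ 2 := sq_le_sq' (abs_le.1 (h.abs_height_le ht)).1
    (abs_le.1 (h.abs_height_le ht)).2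
  have hr : (L + 2 * |2 * ((n : ℝ) - 1)| + 1) ^ 2 ≤ r t ^ 2 :=
    pow_le_pow_left₀ (by linarith) (h.le_radius ht) 2
  nlinarith

theorem angle_nonpos (h : IsFarLaunch lam L n r s φ J) (hlam : lam < 0) {t : ℝ} (ht : t ∈ J) :
    φ t ≤ 0 := by
  have hsub : Icc 0 t ⊆ J := h.ordConnected.out h.zero_mem ht
  have hderiv : ∀ u ∈ Icc 0 t, HasDerivAt φ _ u := fun u hu => h.sol.hasDerivAt_angle u (hsub hu)
  refine image_le_of_deriv_right_lt_deriv_boundary' (B := fun _ => 0) (B' := fun _ => 0)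
    (HasDerivAt.continuousOn hderiv)
    (fun u hu => (hderiv u (Ico_subset_Icc_self hu)).hasDerivWithinAt) h.angle_zero.le
    continuousOn_const (fun _ _ => hasDerivWithinAt_const _ _ _) (fun u hu hφu => ?_)
    (right_mem_Icc.2 (h.subset ht).1)
  have huJ := hsub (Ico_subset_Icc_self hu)
  -- When `φ = 0` the sine term vanishes, so the sign of `s`, still unknown here, does not matter.
  rw [hφu]
  exact (angularVelocity_zero_le (h.radius_pos huJ).le (h.two_mul_abs_le_sq_sub_sq huJ)).trans_lt
    hlam

theorem cos_angle_nonneg (h : IsFarLaunch lam L n r s φ J) (hlam : lam < 0)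
    (hlow : ∀ t ∈ J, -(π / 2) ≤ φ t) : ∀ t ∈ J, 0 ≤ cos (φ t) := fun t ht =>
  cos_nonneg_of_neg_pi_div_two_le_of_le (by linarith [hlow t ht])
    (by linarith [h.angle_nonpos hlam ht, pi_pos])

theorem sin_angle_nonpos (h : IsFarLaunch lam L n r s φ J) (hlam : lam < 0)
    (hlow : ∀ t ∈ J, -(π / 2) ≤ φ t) : ∀ t ∈ J, sin (φ t) ≤ 0 := fun t ht =>
  sin_nonpos_of_nonpos_of_neg_pi_le (h.angle_nonpos hlam ht) (by linarith [hlow t ht, pi_pos])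

theorem antitoneOn_radius (h : IsFarLaunch lam L n r s φ J) (hlam : lam < 0)
    (hlow : ∀ t ∈ J, -(π / 2) ≤ φ t) : AntitoneOn r J :=
  antitoneOn_of_forall_hasDerivAt_nonpos h.ordConnected.convex (fun t ht => (h.sol t ht).2.1)
    (h.sin_angle_nonpos hlam hlow)

theorem monotoneOn_height (h : IsFarLaunch lam L n r s φ J) (hlam : lam < 0)
    (hlow : ∀ t ∈ J, -(π / 2) ≤ φ t) : MonotoneOn s J :=
  monotoneOn_of_forall_hasDerivAt_nonneg h.ordConnected.convex (fun t ht => (h.sol t ht).2.2.1)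
    (h.cos_angle_nonneg hlam hlow)

theorem height_nonneg (h : IsFarLaunch lam L n r s φ J) (hlam : lam < 0)
    (hlow : ∀ t ∈ J, -(π / 2) ≤ φ t) {t : ℝ} (ht : t ∈ J) : 0 ≤ s t :=
  h.height_zero ▸ h.monotoneOn_height hlam hlow h.zero_mem ht (h.subset ht).1

theorem antitoneOn_angle_sub (h : IsFarLaunch lam L n r s φ J) (hlam : lam < 0)
    (hlow : ∀ t ∈ J, -(π / 2) ≤ φ t) : AntitoneOn (fun t => φ t - lam * t) J :=
  antitoneOn_of_forall_hasDerivAt_nonpos h.ordConnected.convex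
    (fun t ht => (h.sol.hasDerivAt_angle t ht).sub (hasDerivAt_const_mul lam))
    (fun t ht => sub_nonpos.2 <| angularVelocity_le (h.radius_pos ht).le
      (h.height_nonneg hlam hlow ht) (h.two_mul_abs_le_sq_sub_sq ht)
      (h.cos_angle_nonneg hlam hlow t ht) (h.sin_angle_nonpos hlam hlow t ht))

theorem antitoneOn_angle (h : IsFarLaunch lam L n r s φ J) (hlam : lam < 0)
    (hlow : ∀ t ∈ J, -(π / 2) ≤ φ t) : AntitoneOn φ J := fun t ht u hu htu => by
  have hsub : φ u - lam * u ≤ φ t - lam * t := h.antitoneOn_angle_sub hlam hlow ht hu htu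
  linarith [mul_le_mul_of_nonpos_left htu hlam.le]

theorem angle_le_mul (h : IsFarLaunch lam L n r s φ J) (hlam : lam < 0)
    (hlow : ∀ t ∈ J, -(π / 2) ≤ φ t) {t : ℝ} (ht : t ∈ J) : φ t ≤ lam * t := by
  have hsub : φ t - lam * t ≤ φ 0 - lam * 0 :=
    h.antitoneOn_angle_sub hlam hlow h.zero_mem ht (h.subset ht).1
  linarith [h.angle_zero]

theorem exists_extension (h : IsFarLaunch lam L n r s φ (Ico 0 T)) (hlam : lam < 0)
    (hlow : ∀ t ∈ Ico 0 T, -(π / 2) ≤ φ t) :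
    ∃ T' > T, ∃ r' s' φ' : ℝ → ℝ,
      (∀ u ∈ Ico 0 T, r' u = r u ∧ s' u = s u ∧ φ' u = φ u) ∧
        TransSol lam n r' s' φ' (Ico 0 T') := by
  have hT : 0 < T := h.zero_mem.2
  obtain ⟨a, ha, hra⟩ := exists_tendsto_nhdsLT_of_antitoneOn hT (h.antitoneOn_radius hlam hlow)
    fun t ht => ⟨h.le_radius ht, h.antitoneOn_radius hlam hlow h.zero_mem ht ht.1⟩
  obtain ⟨b, hb, hsb⟩ := exists_tendsto_nhdsLT_of_monotoneOn hT (h.monotoneOn_height hlam hlow)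
    fun t ht => abs_le.1 (h.abs_height_le ht)
  obtain ⟨c, -, hφc⟩ := exists_tendsto_nhdsLT_of_antitoneOn hT (h.antitoneOn_angle hlam hlow)
    fun t ht => ⟨hlow t ht, h.angle_nonpos hlam ht⟩
  have hLa : L < a := by linarith [ha.1, abs_nonneg (2 * ((n : ℝ) - 1))]
  exact h.sol.exists_extension hT hra hsb hφc (sq_lt_sq' (by linarith [hb.1]) (hb.2.trans_lt hLa))

end IsFarLaunch

/-- The solution `(r, s, φ)` on `J` lives on a right-maximal interval: `J` is `[0, ∞)`, or it is
`[0, T)` and no solution on a larger interval `[0, T')` agrees with `(r, s, φ)` on `J`. -/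
def IsRightMaximal (lam : ℝ) (n : ℕ) (r s φ : ℝ → ℝ) (J : Set ℝ) : Prop :=
  J = Ici 0 ∨ ∃ T : ℝ, 0 < T ∧ J = Ico 0 T ∧ ∀ T' : ℝ, T < T' →
    ¬ ∃ r' s' φ' : ℝ → ℝ, (∀ u ∈ J, r' u = r u ∧ s' u = s u ∧ φ' u = φ u) ∧
      TransSol lam n r' s' φ' (Ico 0 T')

namespace IsRightMaximal

theorem ordConnected (hJ : IsRightMaximal lam n r s φ J) : J.OrdConnected := by
  rcases hJ with rfl | ⟨T, -, rfl, -⟩ <;> infer_instance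

theorem zero_mem (hJ : IsRightMaximal lam n r s φ J) : 0 ∈ J := by
  rcases hJ with rfl | ⟨T, hT, rfl, -⟩
  exacts [self_mem_Ici, left_mem_Ico.2 hT]

theorem subset_Ici (hJ : IsRightMaximal lam n r s φ J) : J ⊆ Ici 0 := by
  rcases hJ with rfl | ⟨T, -, rfl, -⟩
  exacts [Subset.rfl, Ico_subset_Ici_self]

end IsRightMaximal

theorem IsFarLaunch.exists_angle_le (h : IsFarLaunch lam L n r s φ (J ∩ Iic L))
    (hJ : IsRightMaximal lam n r s φ J) (hlam : lam < 0) (hL : lam * L ≤ -(π / 2)) :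
    ∃ b ∈ J ∩ Iic L, φ b ≤ -(π / 2) := by
  by_contra! hhigh
  have hlow : ∀ t ∈ J ∩ Iic L, -(π / 2) ≤ φ t := fun t ht => (hhigh t ht).le
  have hLJ : L ∉ J := fun hmem =>
    (hhigh L ⟨hmem, self_mem_Iic⟩).not_ge ((h.angle_le_mul hlam hlow ⟨hmem, self_mem_Iic⟩).trans hL)
  rcases hJ with rfl | ⟨T, -, rfl, hmax⟩
  · exact hLJ h.zero_mem.2
  · have hTL : T ≤ L := not_lt.1 fun hLT => hLJ ⟨h.zero_mem.2, hLT⟩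
    have hinter : Ico 0 T ∩ Iic L = Ico 0 T :=
      inter_eq_left.2 fun t ht => ht.2.le.trans hTL
    rw [hinter] at h hlow
    obtain ⟨T', hT', hext⟩ := h.exists_extension hlam hlow
    exact hmax T' hT' hext

/-- The time in which an angle decreasing at rate `-lam` turns through `π / 2`. -/
noncomputable def quarterTurnTime (lam : ℝ) : ℝ := π / 2 / -lam

theorem quarterTurnTime_pos (hlam : lam < 0) : 0 < quarterTurnTime lam :=
  div_pos pi_div_two_pos (neg_pos.2 hlam)

theorem mul_quarterTurnTime (hlam : lam ≠ 0) : lam * quarterTurnTime lam = -(π / 2) := by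
  unfold quarterTurnTime
  field_simp

end Solutions

theorem reaches_vertical_angle_for_large_R_general {lam : ℝ} (hlam : lam < 0) {n : ℕ}
    {r s φ : ℝ → ℝ} {J : Set ℝ} (hsol : TransSol lam n r s φ J)
    (hr : 2 * quarterTurnTime lam + 2 * |2 * ((n : ℝ) - 1)| + 1 ≤ r 0) (hs : s 0 = 0)
    (hφ : φ 0 = 0) (hJ : IsRightMaximal lam n r s φ J) :
    ∃ t ∈ J, 0 < t ∧ t ≤ quarterTurnTime lam ∧ φ t = -(π / 2) ∧
      ∀ τ : ℝ, 0 ≤ τ → τ < t → -(π / 2) < φ τ ∧ φ τ ≤ 0 := by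
  have hfar : IsFarLaunch lam (quarterTurnTime lam) n r s φ (J ∩ Iic (quarterTurnTime lam)) :=
    { sol := fun t ht => hsol t ht.1
      ordConnected := hJ.ordConnected.inter ordConnected_Iic
      zero_mem := ⟨hJ.zero_mem, (quarterTurnTime_pos hlam).le⟩
      subset := fun t ht => ⟨hJ.subset_Ici ht.1, ht.2⟩
      radius_zero := hr
      height_zero := hs
      angle_zero := hφ }
  obtain ⟨b, hb, hφb⟩ := hfar.exists_angle_le hJ hlam (mul_quarterTurnTime hlam.ne).le
  have hsub : Icc 0 b ⊆ J ∩ Iic (quarterTurnTime lam) := hfar.ordConnected.out hfar.zero_mem hb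
  obtain ⟨t, ht, hφt, hbefore⟩ := exists_first_eq_of_continuousOn
    (HasDerivAt.continuousOn fun u hu => hfar.sol.hasDerivAt_angle u (hsub hu))
    (hfar.subset hb).1 (by linarith [pi_pos]) hφb
  have htJ := hsub (Ioc_subset_Icc_self ht)
  exact ⟨t, htJ.1, ht.1, htJ.2, hφt, fun τ hτ hτt => ⟨hbefore τ ⟨hτ, hτt⟩,
    hfar.angle_nonpos hlam (hsub ⟨hτ, hτt.le.trans ht.2⟩)⟩⟩

/-- For all sufficiently large `R`, the solution of the transformed system launched from
`r(0) = R`, `s(0) = 0`, `φ(0) = 0` on its right-maximal interval of existence `[0, T)`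
(with `0 < T ≤ ∞`) reaches the angle `φ = −π/2` at some first time, with
`φ ∈ (−π/2, 0]` beforehand. -/
theorem reaches_vertical_angle_for_large_R
    (lam : ℝ) (hlam : lam < 0) (n : ℕ) (hn : 2 ≤ n) :
    ∃ R₀ : ℝ, 0 < R₀ ∧
      ∀ R : ℝ, R₀ ≤ R →
        ∀ (r s φ : ℝ → ℝ) (J : Set ℝ),
          TransSol lam n r s φ J →
          r 0 = R → s 0 = 0 → φ 0 = 0 →
          (J = Set.Ici (0 : ℝ) ∨
            ∃ T : ℝ, 0 < T ∧ J = Set.Ico (0 : ℝ) T ∧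
              ∀ T' : ℝ, T < T' →
                ¬ ∃ r' s' φ' : ℝ → ℝ,
                    (∀ u ∈ J, r' u = r u ∧ s' u = s u ∧ φ' u = φ u) ∧
                    TransSol lam n r' s' φ' (Set.Ico (0 : ℝ) T')) →
          ∃ t : ℝ, t ∈ J ∧ 0 < t ∧ φ t = -(π / 2) ∧
            ∀ τ : ℝ, 0 ≤ τ → τ < t → -(π / 2) < φ τ ∧ φ τ ≤ 0 := by
  refine ⟨2 * quarterTurnTime lam + 2 * |2 * ((n : ℝ) - 1)| + 1,
    by linarith [quarterTurnTime_pos hlam, abs_nonneg (2 * ((n : ℝ) - 1))],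
    fun R hR r s φ J hsol hr hs hφ hJ => ?_⟩
  obtain ⟨t, htJ, ht, -, hangle⟩ :=
    reaches_vertical_angle_for_large_R_general hlam hsol (hr ▸ hR) hs hφ hJ
  exact ⟨t, htJ, ht, hangle⟩
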